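/- arXiv:2501.10102 — 7 statements merged into one kernel-verified Lean document; each statement's English description precedes it below -/
import Mathlib

section
/- Let k ≥ 5 be odd and consider arrangements of Fin (k+1). Applying to the identity arrangement, in order, the operations C, L, C, then the pair (R, C) repeated k−2 times, then L, C, yields the arrangement a with a(0) = 1, a(1) = 4, a(2) = 3, a(j) = j+2 for 3 ≤ j ≤ k−2, a(k−1) = 2 and a(k) = 0, i.e., the arrangement (1,4,3,5,6,…,k,2,0). -/
/-!
Each move permutes positions, hence is right multiplication by a fixed permutation: `C` by `(1 2)`,
`L` by `(0 1)`, `R` by the inverse of `(0 1 … k)`. Let `c = (1 2 … k)`. Then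
`(0 1 … k) = (0 1) c`, and the braid relation shows that `R` followed by `C` is right multiplication
by the conjugate `(0 1) c⁻¹ (0 1)`. Since `c ^ k = 1`, its power with exponent `k - 2` is
`(0 1) c² (0 1)`, and the whole word collapses to `(0 1) (1 2) c² (1 2)`.
-/

/-- `cyc i j` is the permutation of positions with `i ↦ j`, `p ↦ p - 1` for `i < p ≤ j`,
and every other position fixed (the cycle `(j, j-1, …, i)`). -/
def cyc {n : ℕ} (i j : Fin n) : Equiv.Perm (Fin n) :=
  (((List.finRange n).filter (fun p => decide (i ≤ p ∧ p ≤ j))).reverse).formPerm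

/-- The move `C` on arrangements of `Fin (k+1)`: exchange the entries at positions 1 and 2. -/
def Cmove (k : ℕ) (a : Equiv.Perm (Fin (k + 1))) : Equiv.Perm (Fin (k + 1)) :=
  if h : 2 < k + 1 then (Equiv.swap ⟨1, by omega⟩ ⟨2, h⟩).trans a else a

/-- The move `L` on arrangements of `Fin (k+1)`: exchange the entries at positions 0 and 1. -/
def Lmove (k : ℕ) (a : Equiv.Perm (Fin (k + 1))) : Equiv.Perm (Fin (k + 1)) :=
  if h : 1 < k + 1 then (Equiv.swap ⟨0, by omega⟩ ⟨1, h⟩).trans a else a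

/-- The move `R` on arrangements of `Fin (k+1)`: move the entry at position `k` to
position 0, shifting the entries at positions `0, …, k-1` one position to the right. -/
def Rmove (k : ℕ) (a : Equiv.Perm (Fin (k + 1))) : Equiv.Perm (Fin (k + 1)) :=
  (cyc (⟨0, by omega⟩ : Fin (k + 1)) ⟨k, by omega⟩).trans a

section PositionPermutations

open Equiv

theorem formPerm_finRange (n : ℕ) : (List.finRange n).formPerm = finRotate n := by
  ext i
  have := i.neZero
  have h := List.formPerm_apply_getElem (List.finRange n) (List.nodup_finRange n) i (by simp)
  simp only [List.getElem_finRange, List.length_finRange, Fin.cast_mk, Fin.eta] at h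
  simp [h, finRotate_apply, Fin.val_add]

theorem cyc_zero_last (n : ℕ) : cyc 0 (Fin.last n) = (Fin.cycleIcc 0 (Fin.last n))⁻¹ := by
  have h : (List.finRange (n + 1)).filter (fun p => decide (0 ≤ p ∧ p ≤ Fin.last n)) =
      List.finRange (n + 1) := by
    simp [Fin.le_last]
  rw [cyc, h, List.formPerm_reverse, formPerm_finRange, Fin.cycleIcc_zero_eq_cycleRange,
    Fin.cycleRange_last]

theorem cycleIcc_castSucc_succ {n : ℕ} (i : Fin n) :
    Fin.cycleIcc i.castSucc i.succ = swap i.castSucc i.succ := by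
  have := i.neZero
  ext p
  rcases lt_trichotomy p i.castSucc with h | rfl | h
  · rw [Fin.cycleIcc_of_lt h, swap_apply_of_ne_of_ne h.ne (h.trans i.castSucc_lt_succ).ne]
  · rw [Fin.cycleIcc_of_ge_of_lt le_rfl i.castSucc_lt_succ, swap_apply_left, Fin.coeSucc_eq_succ]
  · rcases (Fin.castSucc_lt_iff_succ_le.mp h).eq_or_lt with rfl | h'
    · rw [Fin.cycleIcc_of_last i.castSucc_lt_succ.le, swap_apply_right]
    · rw [Fin.cycleIcc_of_gt h', swap_apply_of_ne_of_ne h.ne' h'.ne']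

theorem cycleIcc_castSucc_eq_swap_mul {n : ℕ} {i : Fin n} {j : Fin (n + 1)} (hij : i.succ ≤ j) :
    Fin.cycleIcc i.castSucc j = swap i.castSucc i.succ * Fin.cycleIcc i.succ j := by
  rw [← cycleIcc_castSucc_succ]
  exact DFunLike.coe_injective (Fin.cycleIcc.trans i.castSucc_lt_succ.le hij).symm

theorem commute_swap_cycleIcc {n : ℕ} {p q i j : Fin n} (hp : p < i) (hq : q < i) :
    Commute (swap p q) (Fin.cycleIcc i j) := by
  rw [commute_iff_eq, mul_swap_eq_swap_mul, Fin.cycleIcc_of_lt hp, Fin.cycleIcc_of_lt hq]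

theorem cycleIcc_pow_eq_one {n : ℕ} {i j : Fin n} (hij : i < j) :
    Fin.cycleIcc i j ^ (j - i + 1 : ℕ) = 1 := by
  rw [← orderOf_dvd_iff_pow_eq_one, ← Perm.lcm_cycleType, Fin.cycleType_cycleIcc_of_lt hij]
  simp

theorem swap_braid {α : Type*} [DecidableEq α] {x y z : α}
    (hxy : x ≠ y) (hxz : x ≠ z) (hyz : y ≠ z) :
    swap x y * swap y z * swap x y = swap y z * swap x y * swap y z := by
  rw [swap_mul_swap_mul_swap hxy hxz, swap_comm x y, swap_comm y z,
    swap_mul_swap_mul_swap hyz.symm hxz.symm, swap_comm]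

theorem swap_zero_one_braid_swap_one_two (n : ℕ) :
    (swap 0 1 * swap 1 2 * swap 0 1 : Perm (Fin (n + 3))) = swap 1 2 * swap 0 1 * swap 1 2 :=
  swap_braid zero_ne_one (Fin.ne_of_lt Nat.zero_lt_two) (Fin.ne_of_lt Nat.one_lt_two)

theorem swap_mul_cycleIcc_zero_last (n : ℕ) :
    swap 1 2 * Fin.cycleIcc 0 (Fin.last (n + 2)) =
      swap 0 1 * Fin.cycleIcc 1 (Fin.last (n + 2)) * (swap 0 1)⁻¹ := by
  have h_zero : Fin.cycleIcc 0 (Fin.last (n + 2)) =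
      swap 0 1 * Fin.cycleIcc 1 (Fin.last (n + 2)) :=
    cycleIcc_castSucc_eq_swap_mul (i := (0 : Fin (n + 2))) (Fin.le_last _)
  have h_one : Fin.cycleIcc 1 (Fin.last (n + 2)) =
      swap 1 2 * Fin.cycleIcc 2 (Fin.last (n + 2)) :=
    cycleIcc_castSucc_eq_swap_mul (i := (1 : Fin (n + 2))) (Fin.le_last _)
  have h_comm : Commute (swap 0 1) (Fin.cycleIcc 2 (Fin.last (n + 2))) :=
    commute_swap_cycleIcc Nat.zero_lt_two Nat.one_lt_two
  rw [eq_mul_inv_iff_mul_eq, h_zero, h_one]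
  set s : Perm (Fin (n + 3)) := swap 0 1
  set t : Perm (Fin (n + 3)) := swap 1 2
  set d := Fin.cycleIcc 2 (Fin.last (n + 2))
  have h_braid : s * t * s = t * s * t := swap_zero_one_braid_swap_one_two n
  have h_square : s * s = 1 := swap_mul_self 0 1
  calc t * (s * (t * d)) * s
      = t * s * t * (d * s) := by simp only [mul_assoc]
    _ = s * t * s * (s * d) := by rw [h_braid, h_comm.eq]
    _ = s * t * (s * s) * d := by simp only [mul_assoc]
    _ = s * (t * d) := by rw [h_square, mul_one, mul_assoc]

theorem coe_swap_apply {n : ℕ} (i j p : Fin n) : (swap i j p : ℕ) = swap (i : ℕ) j p :=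
  (Fin.val_injective.swap_apply i j p).symm

theorem coe_cycleIcc_one_last_apply {n : ℕ} (p : Fin (n + 2)) :
    (Fin.cycleIcc 1 (Fin.last (n + 1)) p : ℕ) =
      if (p : ℕ) = 0 then (0 : ℕ) else if (p : ℕ) = n + 1 then (1 : ℕ) else (p : ℕ) + 1 := by
  rcases eq_or_ne p 0 with rfl | h_zero
  · simp [Fin.cycleIcc_of_lt]
  rcases eq_or_ne p (Fin.last (n + 1)) with rfl | h_last
  · simp [Fin.cycleIcc_of_last (Fin.le_last _)]
  · have h_lt := Fin.lt_last_iff_ne_last.mpr h_last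
    rw [Fin.cycleIcc_of_ge_of_lt (Fin.one_le_of_ne_zero h_zero) h_lt, Fin.val_add_one_of_lt h_lt,
      if_neg (Fin.val_ne_zero_iff.mpr h_zero), if_neg (by simpa [Fin.ext_iff] using h_last)]

theorem coe_cycleIcc_one_last_sq_apply {n : ℕ} (p : Fin (n + 3)) :
    ((Fin.cycleIcc 1 (Fin.last (n + 2)) ^ 2) p : ℕ) =
      if (p : ℕ) = 0 then (0 : ℕ) else if (p : ℕ) ≤ n then (p : ℕ) + 2 else (p : ℕ) - n := by
  simp only [sq, Perm.mul_apply, coe_cycleIcc_one_last_apply]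
  grind

end PositionPermutations

section Moves

open Equiv

theorem Cmove_eq_mul_swap (n : ℕ) (a : Perm (Fin (n + 3))) :
    Cmove (n + 2) a = a * swap 1 2 :=
  dif_pos (by omega)

theorem Lmove_eq_mul_swap (n : ℕ) (a : Perm (Fin (n + 2))) :
    Lmove (n + 1) a = a * swap 0 1 :=
  dif_pos (by omega)

theorem Rmove_eq_mul_inv_cycleIcc (n : ℕ) (a : Perm (Fin (n + 1))) :
    Rmove n a = a * (Fin.cycleIcc 0 (Fin.last n))⁻¹ := by
  rw [← cyc_zero_last]
  rfl

theorem iterate_Cmove_Rmove (n : ℕ) (a : Perm (Fin (n + 3))) :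
    (fun b => Cmove (n + 2) (Rmove (n + 2) b))^[n] a =
      a * (swap 0 1 * Fin.cycleIcc 1 (Fin.last (n + 2)) ^ 2 * swap 0 1) := by
  set c := Fin.cycleIcc 1 (Fin.last (n + 2))
  have h_step : (fun b => Cmove (n + 2) (Rmove (n + 2) b)) =
      (· * (swap 0 1 * c * (swap 0 1)⁻¹)⁻¹) := by
    funext b
    rw [Cmove_eq_mul_swap, Rmove_eq_mul_inv_cycleIcc, mul_assoc, ← swap_inv 1 2, ← mul_inv_rev,
      swap_mul_cycleIcc_zero_last]
  have h_pow : c ^ n * c ^ 2 = 1 := by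
    rw [← pow_add]
    simpa [c] using cycleIcc_pow_eq_one (i := 1) (j := Fin.last (n + 2)) (by simp [Fin.lt_def])
  rw [h_step, mul_right_iterate_apply, inv_pow, conj_pow, conj_inv,
    inv_eq_of_mul_eq_one_right h_pow, swap_inv]

theorem move_word_eq_mul (n : ℕ) (a : Perm (Fin (n + 3))) :
    Cmove (n + 2) (Lmove (n + 2) ((fun b => Cmove (n + 2) (Rmove (n + 2) b))^[n]
      (Cmove (n + 2) (Lmove (n + 2) (Cmove (n + 2) a))))) =
    a * (swap 0 1 * swap 1 2 * Fin.cycleIcc 1 (Fin.last (n + 2)) ^ 2 * swap 1 2) := by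
  rw [iterate_Cmove_Rmove]
  simp only [Cmove_eq_mul_swap, Lmove_eq_mul_swap]
  set s : Perm (Fin (n + 3)) := swap 0 1
  set t : Perm (Fin (n + 3)) := swap 1 2
  set c := Fin.cycleIcc 1 (Fin.last (n + 2))
  have h_braid : s * t * s = t * s * t := swap_zero_one_braid_swap_one_two n
  have h_square : s * s = 1 := swap_mul_self 0 1
  calc a * t * s * t * (s * c ^ 2 * s) * s * t
      = a * (t * s * t) * (s * c ^ 2 * (s * s) * t) := by simp only [mul_assoc]
    _ = a * (s * t * s) * (s * c ^ 2 * t) := by rw [h_braid, h_square, mul_one]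
    _ = a * (s * t * (s * s) * c ^ 2 * t) := by simp only [mul_assoc]
    _ = a * (s * t * c ^ 2 * t) := by rw [h_square, mul_one]

end Moves

theorem lemma_one_general (k : ℕ) (hk : 4 ≤ k)
    (a : Equiv.Perm (Fin (k + 1)))
    (ha : a = Cmove k (Lmove k
      ((fun b => Cmove k (Rmove k b))^[k - 2] (Cmove k (Lmove k (Cmove k 1)))))) :
    a ⟨0, by omega⟩ = ⟨1, by omega⟩ ∧
    a ⟨1, by omega⟩ = ⟨4, by omega⟩ ∧
    a ⟨2, by omega⟩ = ⟨3, by omega⟩ ∧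
    (∀ j : ℕ, ∀ _h3 : 3 ≤ j, ∀ _hj : j ≤ k - 2,
      a ⟨j, by omega⟩ = ⟨j + 2, by omega⟩) ∧
    a ⟨k - 1, by omega⟩ = ⟨2, by omega⟩ ∧
    a ⟨k, by omega⟩ = ⟨0, by omega⟩ := by
  obtain ⟨n, rfl⟩ : ∃ n, k = n + 2 := ⟨k - 2, by omega⟩
  rw [Nat.add_sub_cancel, move_word_eq_mul, one_mul] at ha
  simp only [ha, Equiv.Perm.mul_apply, Fin.ext_iff, coe_swap_apply, coe_cycleIcc_one_last_sq_apply,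
    Fin.val_zero, Fin.val_one, Fin.val_two]
  refine ⟨?_, ?_, ?_, fun j h3 hj => ?_, ?_, ?_⟩ <;> grind

/-- For odd `k ≥ 5`, applying to the identity arrangement of `Fin (k+1)`, in order,
`C`, `L`, `C`, then the pair `(R, C)` repeated `k - 2` times, then `L`, `C`, yields the
arrangement `(1,4,3,5,6,…,k,2,0)`. -/
theorem lemma_one (k : ℕ) (hk : 5 ≤ k) (hodd : Odd k)
    (a : Equiv.Perm (Fin (k + 1)))
    (ha : a = Cmove k (Lmove k
      ((fun b => Cmove k (Rmove k b))^[k - 2] (Cmove k (Lmove k (Cmove k 1)))))) :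
    a ⟨0, by omega⟩ = ⟨1, by omega⟩ ∧
    a ⟨1, by omega⟩ = ⟨4, by omega⟩ ∧
    a ⟨2, by omega⟩ = ⟨3, by omega⟩ ∧
    (∀ j : ℕ, ∀ _h3 : 3 ≤ j, ∀ _hj : j ≤ k - 2,
      a ⟨j, by omega⟩ = ⟨j + 2, by omega⟩) ∧
    a ⟨k - 1, by omega⟩ = ⟨2, by omega⟩ ∧
    a ⟨k, by omega⟩ = ⟨0, by omega⟩ := by
  exact lemma_one_general k (by omega) a ha
end

section
/- Let k ≥ 6 be even. The position permutation π of Fin (k+1) defined by π(0) = 1, π(1) = 2, π(2) = 5, π(3) = 4, π(p) = p+2 for 4 ≤ p ≤ k−2, π(k−1) = 3 and π(k) = 0 is a single cycle of length k+1 (its cycle on positions visits all k+1 positions). -/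
/-!
Because `k` is even, the jumps `p ↦ p + 2` link the odd positions `5, 7, …, k - 1` and the even
positions `4, 6, …, k` into two chains. The exceptional values lead from `0` into the odd chain
(`0 → 1 → 2 → 5`) and from its top into the bottom of the even one (`k - 1 → 3 → 4`), so every
position lies on the orbit of `0`.
-/

open Equiv.Perm

section Perm

variable {α : Type*} {f : Equiv.Perm α}

theorem sameCycle_of_apply_eq {x y : α} (h : f x = y) : f.SameCycle x y :=
  h ▸ sameCycle_apply_right.2 SameCycle.rfl

theorem isCycleOn_univ_of_forall_sameCycle {x : α} (h : ∀ y, f.SameCycle x y) :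
    f.IsCycleOn Set.univ :=
  ⟨Set.bijOn_univ.2 f.bijective, fun y _ z _ => (h y).symm.trans (h z)⟩

variable [Nontrivial α]

theorem isCycle_of_isCycleOn_univ (h : f.IsCycleOn Set.univ) : f.IsCycle :=
  isCycle_iff_exists_isCycleOn.2 ⟨Set.univ, Set.nontrivial_univ, h, fun _ _ => Set.mem_univ _⟩

theorem support_eq_univ_of_isCycleOn_univ [Fintype α] [DecidableEq α]
    (h : f.IsCycleOn Set.univ) : f.support = Finset.univ :=
  Finset.eq_univ_of_forall fun x =>
    mem_support.2 (h.apply_ne Set.nontrivial_univ (Set.mem_univ x))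

end Perm

theorem sameCycle_of_forall_val_apply_eq_add {n d m : ℕ} {σ : Equiv.Perm (Fin n)} {x y : Fin n}
    (hy : (y : ℕ) = x + d * m)
    (hσ : ∀ z : Fin n, x ≤ z → z + d ≤ (y : ℕ) → (σ z : ℕ) = z + d) : σ.SameCycle x y := by
  induction m generalizing y with
  | zero => exact (Fin.ext hy.symm).sameCycle σ
  | succ m ih =>
    rw [Nat.mul_succ, ← Nat.add_assoc] at hy
    let z : Fin n := ⟨x + d * m, by omega⟩
    have hzy : σ z = y := Fin.ext ((hσ z (Nat.le_add_right _ _) hy.ge).trans hy.symm)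
    have hxz : σ.SameCycle x z :=
      ih rfl fun w hxw hwz => hσ w hxw (hwz.trans ((Nat.le_add_right _ d).trans hy.ge))
    exact hxz.trans (sameCycle_of_apply_eq hzy)

/-- For even `k ≥ 6`, the position permutation `π` of `Fin (k+1)` with `π 0 = 1`,
`π 1 = 2`, `π 2 = 5`, `π 3 = 4`, `π p = p + 2` for `4 ≤ p ≤ k - 2`, `π (k-1) = 3` and
`π k = 0` is a single cycle of length `k + 1`: its cycle visits all `k + 1` positions. -/
theorem pi_is_single_cycle (k : ℕ) (hk : 6 ≤ k) (hke : Even k)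
    (π : Equiv.Perm (Fin (k + 1)))
    (h0 : π ⟨0, by omega⟩ = ⟨1, by omega⟩)
    (h1 : π ⟨1, by omega⟩ = ⟨2, by omega⟩)
    (h2 : π ⟨2, by omega⟩ = ⟨5, by omega⟩)
    (h3 : π ⟨3, by omega⟩ = ⟨4, by omega⟩)
    (hp : ∀ p : ℕ, ∀ _h4 : 4 ≤ p, ∀ _hp : p ≤ k - 2,
      π ⟨p, by omega⟩ = ⟨p + 2, by omega⟩)
    (hk1 : π ⟨k - 1, by omega⟩ = ⟨3, by omega⟩)
    (hkk : π ⟨k, by omega⟩ = ⟨0, by omega⟩) :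
    π.IsCycle ∧ π.support = Finset.univ := by
  have climb {x y : Fin (k + 1)} {m : ℕ} (hx : 4 ≤ (x : ℕ)) (hy : (y : ℕ) = x + 2 * m) :
      π.SameCycle x y :=
    sameCycle_of_forall_val_apply_eq_add hy fun z hxz hzy =>
      congrArg Fin.val (hp z (hx.trans hxz) (by omega))
  obtain ⟨r, hr⟩ := hke.two_dvd
  have zero_one := sameCycle_of_apply_eq h0
  have zero_two := zero_one.trans (sameCycle_of_apply_eq h1)
  have zero_five := zero_two.trans (sameCycle_of_apply_eq h2)
  have five_top : π.SameCycle ⟨5, by omega⟩ ⟨k - 1, by omega⟩ :=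
    climb (Nat.le_succ 4) (show k - 1 = 5 + 2 * (r - 3) by omega)
  have zero_three := (zero_five.trans five_top).trans (sameCycle_of_apply_eq hk1)
  have zero_four := zero_three.trans (sameCycle_of_apply_eq h3)
  have orbit_zero : ∀ x, π.SameCycle ⟨0, by omega⟩ x
    | ⟨0, _⟩ => SameCycle.rfl
    | ⟨1, _⟩ => zero_one
    | ⟨2, _⟩ => zero_two
    | ⟨3, _⟩ => zero_three
    | ⟨x + 4, _⟩ => by
      obtain ⟨j, hj | hj⟩ := x.even_or_odd'
      · exact zero_four.trans (climb le_rfl (show x + 4 = 4 + 2 * j by omega))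
      · exact zero_five.trans (climb (Nat.le_succ 4) (show x + 4 = 5 + 2 * j by omega))
  have hcycle := isCycleOn_univ_of_forall_sameCycle orbit_zero
  have : Nontrivial (Fin (k + 1)) := Fin.nontrivial_iff_two_le.2 (by omega)
  exact ⟨isCycle_of_isCycleOn_univ hcycle, support_eq_univ_of_isCycleOn_univ hcycle⟩
end

section
/- Let k ≥ 6 be even and let π be the position permutation of Fin (k+1) defined by π(0) = 1, π(1) = 2, π(2) = 5, π(3) = 4, π(p) = p+2 for 4 ≤ p ≤ k−2, π(k−1) = 3, π(k) = 0. Let A₀ : Fin (k+1) → Fin (k+1) be the arrangement with A₀(0) = 0, A₀(1) = 2, A₀(2) = 5, A₀(3) = 4, A₀(j) = j+2 for 4 ≤ j ≤ k−2, A₀(k−1) = 3 and A₀(k) = 1 (i.e., (0,2,5,4,6,7,…,k,3,1)). Then A₀ ∘ π^k is the arrangement (1,0,2,3,…,k), i.e., (A₀ ∘ π^k)(0) = 1, (A₀ ∘ π^k)(1) = 0, and (A₀ ∘ π^k)(p) = p for 2 ≤ p ≤ k. -/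
/-!
The arrangement `A₀` is `π` with its values at positions `0` and `k` exchanged, that is,
`A₀ = π * swap 0 k = swap 1 0 * π`.  Moreover `π` is a single cycle on all `k + 1` positions:
it joins `0 → 1 → 2 → 5`, then the odd positions `5 → 7 → ⋯ → k - 1` (`k` being even), then
`k - 1 → 3 → 4`, then the even positions `4 → 6 → ⋯ → k`.  Hence `π ^ (k + 1) = 1` and
`A₀ * π ^ k = swap 1 0 * π ^ (k + 1) = swap 1 0`.
-/

open Equiv Equiv.Perm

theorem pow_card_eq_one_of_forall_sameCycle {α : Type*} [Fintype α] {σ : Perm α} {a : α}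
    (hσ : ∀ x, σ.SameCycle a x) : σ ^ Fintype.card α = 1 := by
  have hcycle : σ.IsCycleOn ((Finset.univ : Finset α) : Set α) :=
    ⟨by simpa only [Finset.coe_univ, Set.bijOn_univ] using σ.bijective,
      fun x _ y _ ↦ (hσ x).symm.trans (hσ y)⟩
  ext x
  exact hcycle.pow_card_apply (Finset.mem_univ x)

theorem eq_mul_swap_of_forall_ne {α : Type*} [DecidableEq α] {σ τ : Perm α} {a b : α}
    (ha : σ a = τ b) (hb : σ b = τ a) (hne : ∀ x, x ≠ a → x ≠ b → σ x = τ x) :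
    σ = τ * swap a b := by
  ext x
  rw [Perm.mul_apply, swap_apply_def]
  split_ifs with hxa hxb
  · rw [hxa, ha]
  · rw [hxb, hb]
  · exact hne x hxa hxb

theorem sameCycle_of_modEq {n d a b : ℕ} {σ : Perm (Fin n)} (hab : a ≤ b) (hb : b < n)
    (hmod : a ≡ b [MOD d])
    (hσ : ∀ p, a ≤ p → ∀ hp : p + d < n, σ ⟨p, by omega⟩ = ⟨p + d, hp⟩) :
    σ.SameCycle ⟨a, hab.trans_lt hb⟩ ⟨b, hb⟩ := by
  obtain ⟨m, rfl⟩ : ∃ m, b = a + d * m :=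
    ((Nat.modEq_iff_dvd' hab).1 hmod).imp fun _ _ ↦ by omega
  clear hmod
  induction m with
  | zero => exact .refl σ _
  | succ m ih =>
    have ha : a ≤ a + d * m := Nat.le_add_right a _
    simp only [Nat.mul_succ, ← Nat.add_assoc] at hb ⊢
    rw [← hσ (a + d * m) ha hb, sameCycle_apply_right]
    exact ih ha _ hσ

/-- The values that the permutation `π` and the arrangement `A₀` share: those at the inner
positions `1, …, k - 1`.  The values at the end positions `0` and `k` are left free.  Bounds of
positions are arguments of the fields because `6 ≤ k` is not built into the structure. -/
structure HasInnerPattern {k : ℕ} (f : Fin (k + 1) → Fin (k + 1)) : Prop where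
  map_one : ∀ (h₁ : 1 < k + 1) (h₂ : 2 < k + 1), f ⟨1, h₁⟩ = ⟨2, h₂⟩
  map_two : ∀ (h₂ : 2 < k + 1) (h₅ : 5 < k + 1), f ⟨2, h₂⟩ = ⟨5, h₅⟩
  map_three : ∀ (h₃ : 3 < k + 1) (h₄ : 4 < k + 1), f ⟨3, h₃⟩ = ⟨4, h₄⟩
  map_of_four_le : ∀ (p : ℕ) (hp : p < k + 1) (hp₂ : p + 2 < k + 1), 4 ≤ p →
    f ⟨p, hp⟩ = ⟨p + 2, hp₂⟩
  map_sub_one : ∀ (h : k - 1 < k + 1) (h₃ : 3 < k + 1), f ⟨k - 1, h⟩ = ⟨3, h₃⟩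

namespace HasInnerPattern

variable {k : ℕ}

theorem apply_eq_apply (hk : 6 ≤ k) {f g : Fin (k + 1) → Fin (k + 1)} (hf : HasInnerPattern f)
    (hg : HasInnerPattern g) (x : Fin (k + 1)) (hx0 : x ≠ 0) (hxk : x ≠ Fin.last k) :
    f x = g x := by
  obtain ⟨p, hp⟩ := x
  rw [ne_eq, Fin.ext_iff] at hx0 hxk
  obtain rfl | rfl | rfl | rfl | ⟨h4, hp2⟩ :
      p = 1 ∨ p = 2 ∨ p = 3 ∨ p = k - 1 ∨ 4 ≤ p ∧ p + 2 < k + 1 := by grind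
  · rw [hf.map_one _ (by omega), hg.map_one]
  · rw [hf.map_two _ (by omega), hg.map_two]
  · rw [hf.map_three _ (by omega), hg.map_three]
  · rw [hf.map_sub_one _ (by omega), hg.map_sub_one]
  · rw [hf.map_of_four_le p hp hp2 h4, hg.map_of_four_le p hp hp2 h4]

variable {σ : Perm (Fin (k + 1))}

theorem sameCycle_of_modEq_two (hσ : HasInnerPattern σ) {p q : ℕ} (h4 : 4 ≤ p) (hpq : p ≤ q)
    (hq : q < k + 1) (hmod : p ≡ q [MOD 2]) : σ.SameCycle ⟨p, hpq.trans_lt hq⟩ ⟨q, hq⟩ :=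
  sameCycle_of_modEq hpq hq hmod fun r hr hr2 ↦ hσ.map_of_four_le r _ hr2 (h4.trans hr)

theorem sameCycle_zero (hk : 6 ≤ k) (hke : Even k) (hσ : HasInnerPattern σ)
    {h₁ : 1 < k + 1} (h0 : σ 0 = ⟨1, h₁⟩) (x : Fin (k + 1)) : σ.SameCycle 0 x := by
  have hone : σ.SameCycle 0 ⟨1, h₁⟩ := h0 ▸ (SameCycle.refl σ 0).apply_right
  have htwo : σ.SameCycle 0 ⟨2, by omega⟩ := hσ.map_one h₁ _ ▸ hone.apply_right
  have hodd {p : ℕ} (h5 : 5 ≤ p) (hp : p < k + 1) (hmod : 5 ≡ p [MOD 2]) :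
      σ.SameCycle 0 ⟨p, hp⟩ :=
    (hσ.map_two _ _ ▸ htwo.apply_right).trans (hσ.sameCycle_of_modEq_two (by omega) h5 hp hmod)
  have hthree : σ.SameCycle 0 ⟨3, by omega⟩ := by
    have hmod : 5 ≡ k - 1 [MOD 2] := by grind [Nat.ModEq]
    exact hσ.map_sub_one _ _ ▸ (hodd (by omega) (by omega) hmod).apply_right
  have heven {p : ℕ} (h4 : 4 ≤ p) (hp : p < k + 1) (hmod : 4 ≡ p [MOD 2]) :
      σ.SameCycle 0 ⟨p, hp⟩ :=
    (hσ.map_three _ _ ▸ hthree.apply_right).trans (hσ.sameCycle_of_modEq_two le_rfl h4 hp hmod)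
  obtain ⟨p, hp⟩ := x
  obtain rfl | rfl | rfl | rfl | ⟨h4, hmod⟩ | ⟨h5, hmod⟩ :
      p = 0 ∨ p = 1 ∨ p = 2 ∨ p = 3 ∨ (4 ≤ p ∧ 4 ≡ p [MOD 2]) ∨ (5 ≤ p ∧ 5 ≡ p [MOD 2]) := by
    grind [Nat.ModEq]
  · exact .refl σ 0
  · exact hone
  · exact htwo
  · exact hthree
  · exact heven h4 hp hmod
  · exact hodd h5 hp hmod

end HasInnerPattern

/-- For even `k ≥ 6`, let `π` be the position permutation of `Fin (k+1)` with `π 0 = 1`,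
`π 1 = 2`, `π 2 = 5`, `π 3 = 4`, `π p = p + 2` for `4 ≤ p ≤ k - 2`, `π (k-1) = 3`,
`π k = 0`, and let `A₀` be the arrangement `(0,2,5,4,6,7,…,k,3,1)`.  Then `A₀ ∘ π^k` is
the arrangement `(1,0,2,3,…,k)`. -/
theorem backward_iteration (k : ℕ) (hk : 6 ≤ k) (hke : Even k)
    (π : Equiv.Perm (Fin (k + 1)))
    (h0 : π ⟨0, by omega⟩ = ⟨1, by omega⟩)
    (h1 : π ⟨1, by omega⟩ = ⟨2, by omega⟩)
    (h2 : π ⟨2, by omega⟩ = ⟨5, by omega⟩)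
    (h3 : π ⟨3, by omega⟩ = ⟨4, by omega⟩)
    (hp : ∀ p : ℕ, ∀ _h4 : 4 ≤ p, ∀ _hp : p ≤ k - 2,
      π ⟨p, by omega⟩ = ⟨p + 2, by omega⟩)
    (hk1 : π ⟨k - 1, by omega⟩ = ⟨3, by omega⟩)
    (hkk : π ⟨k, by omega⟩ = ⟨0, by omega⟩)
    (A₀ : Equiv.Perm (Fin (k + 1)))
    (hA0 : A₀ ⟨0, by omega⟩ = ⟨0, by omega⟩)
    (hA1 : A₀ ⟨1, by omega⟩ = ⟨2, by omega⟩)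
    (hA2 : A₀ ⟨2, by omega⟩ = ⟨5, by omega⟩)
    (hA3 : A₀ ⟨3, by omega⟩ = ⟨4, by omega⟩)
    (hAj : ∀ j : ℕ, ∀ _h4 : 4 ≤ j, ∀ _hj : j ≤ k - 2,
      A₀ ⟨j, by omega⟩ = ⟨j + 2, by omega⟩)
    (hAk1 : A₀ ⟨k - 1, by omega⟩ = ⟨3, by omega⟩)
    (hAk : A₀ ⟨k, by omega⟩ = ⟨1, by omega⟩) :
    A₀ ((π ^ k) ⟨0, by omega⟩) = ⟨1, by omega⟩ ∧
    A₀ ((π ^ k) ⟨1, by omega⟩) = ⟨0, by omega⟩ ∧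
    (∀ p : ℕ, ∀ _h2 : 2 ≤ p, ∀ _hp : p ≤ k,
      A₀ ((π ^ k) ⟨p, by omega⟩) = ⟨p, by omega⟩) := by
  have hπ : HasInnerPattern π :=
    ⟨fun _ _ ↦ h1, fun _ _ ↦ h2, fun _ _ ↦ h3, fun p _ _ h4 ↦ hp p h4 (by omega), fun _ _ ↦ hk1⟩
  have hA : HasInnerPattern A₀ :=
    ⟨fun _ _ ↦ hA1, fun _ _ ↦ hA2, fun _ _ ↦ hA3, fun j _ _ h4 ↦ hAj j h4 (by omega),
      fun _ _ ↦ hAk1⟩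
  have hswap : A₀ = π * swap ⟨0, by omega⟩ ⟨k, by omega⟩ :=
    eq_mul_swap_of_forall_ne (hA0.trans hkk.symm) (hAk.trans h0.symm) (hA.apply_eq_apply hk hπ)
  have hpow : π ^ (k + 1) = 1 := by
    simpa only [Fintype.card_fin] using
      pow_card_eq_one_of_forall_sameCycle (hπ.sameCycle_zero hk hke h0)
  have hcomp : A₀ * π ^ k = swap ⟨1, by omega⟩ ⟨0, by omega⟩ := by
    rw [hswap, mul_swap_eq_swap_mul, h0, hkk, mul_assoc, ← pow_succ', hpow, mul_one]
  simp only [← Perm.mul_apply, hcomp]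
  exact ⟨swap_apply_right _ _, swap_apply_left _ _, fun p h2p _ ↦
    swap_apply_of_ne_of_ne (Fin.ne_of_val_ne (show p ≠ 1 by omega))
      (Fin.ne_of_val_ne (show p ≠ 0 by omega))⟩
end

section
/- For every n ≥ 2, the last arrangement of the list Gen(n) is: the arrangement (1,0,2,3,…,n−1) (identity with the first two entries exchanged) if n is odd or n = 2; the arrangement (1,2,3,0) if n = 4; and the arrangement a with a(0) = 1, a(1) = 4, a(2) = 3, a(j) = j+2 for 3 ≤ j ≤ n−3, a(n−2) = 2, a(n−1) = 0 (i.e., (1,4,3,5,6,…,n−1,2,0)) if n is even and n ≥ 6. -/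
/-- `left_i`: exchange the entries at positions `i` and `i+1`. -/
def leftMove (n i : ℕ) (a : Equiv.Perm (Fin n)) : Equiv.Perm (Fin n) :=
  if h : i + 1 < n then (Equiv.swap ⟨i, by omega⟩ ⟨i + 1, h⟩).trans a else a

/-- `right_i`: move the entry at position `n-1` to position `i`, shifting the entries
at positions `i, …, n-2` one position to the right. -/
def rightMove (n i : ℕ) (a : Equiv.Perm (Fin n)) : Equiv.Perm (Fin n) :=
  if h : i + 1 < n then (cyc (⟨i, by omega⟩ : Fin n) ⟨n - 1, by omega⟩).trans a else a

/-- The pattern of moves performed between the recursive calls on a sublist of `m = n - i`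
elements: one `left`, then `m - 3` times `right` (if `m` is even) or `left` (if `m` is odd),
and finally (when `m > 2`) one more `left`.  `true` codes `left`, `false` codes `right`. -/
def movesList (m : ℕ) : List Bool :=
  true :: (List.replicate (m - 3) (if Even m then false else true) ++
    if 2 < m then [true] else [])

/-- The recursive generation procedure `gen(a, i)` (with an extra fuel argument making the
recursion structural; `fuel = n - i` always suffices, and `Gen` below uses fuel `n`).
If `i ≥ n - 1` it emits `[a]`; otherwise it first emits `gen(a, i+1)` (the "no-op" call)
and then, for each move prescribed by `movesList (n - i)`, applies that move at position `i`
to the last arrangement emitted so far and emits the generated list of the result. -/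
def gen (n : ℕ) : ℕ → Equiv.Perm (Fin n) → ℕ → List (Equiv.Perm (Fin n))
  | 0, a, _ => [a]
  | fuel + 1, a, i =>
      if i + 1 < n then
        (movesList (n - i)).foldl
          (fun acc b =>
            acc ++ gen n fuel
              ((if b then leftMove n i else rightMove n i) (acc.getLastD 1)) (i + 1))
          (gen n fuel a (i + 1))
      else [a]

/-- `Gen n = gen(id, 0)`: the full list of arrangements produced by the algorithm. -/
def Gen (n : ℕ) : List (Equiv.Perm (Fin n)) := gen n n 1 0

/-!
Every move and every recursive call multiplies the arrangement on the right by a permutation of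
positions, so the last arrangement of `gen(a, i)` is `a * σ_i` with `σ_i` independent of `a`. Let
`s_i = (i i+1)` and let `c_i = s_i s_{i+1} ⋯ s_{n-2}` be the cycle `i ↦ i + 1 ↦ ⋯ ↦ n - 1 ↦ i`, so
that `right_i` multiplies by `c_i⁻¹`. By downward induction on `i`, `σ_i = s_i` if `n - i` is odd
and `σ_i = c_{i+2} c_i s_{i+1}` if `n - i` is even.

* If `m = n - i ≥ 3` is odd, then `σ_i = σ_{i+1} (s_i σ_{i+1})^(m-1)`. Since `s_i σ_{i+1}` is
  conjugate to `c_i c_{i+2}`, which is an `m`-cycle, its `m`-th power is `1` and `σ_i = s_i⁻¹`.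
* If `m ≥ 4` is even, then `σ_{i+1} = s_{i+1}`, and `c_i⁻¹ s_{i+1}` is the inverse of a conjugate
  of the `(m-1)`-cycle `c_{i+1}`. Its power `m - 3` is therefore its power `-2`, and what remains
  simplifies by `c_i s_i = s_{i+1} c_i` and `s_j c_j = c_{j+1}`.
-/

open Equiv Equiv.Perm

section MergingCycles

variable {α : Type*} [Finite α] [DecidableEq α] {f : Perm α} {x y : α}

lemma isCycle_and_orderOf_swap_mul (hf : f.IsCycle) (hx : f x = x) (hy : f y ≠ y) :
    (swap x y * f).IsCycle ∧ orderOf (swap x y * f) = orderOf f + 1 := by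
  have := Fintype.ofFinite α
  obtain ⟨l, hl⟩ : ∃ l, f.toList y = y :: l := by
    obtain ⟨z, l, hzl⟩ := List.exists_cons_of_ne_nil (mt toList_eq_nil_iff.1 (by simpa using hy))
    have hz : z = y := by
      simpa [hzl] using toList_getElem_zero (p := f) (x := y) (mem_support.2 hy)
    exact ⟨l, hz ▸ hzl⟩
  have hform : (y :: l).formPerm = f := by
    rw [← hl, formPerm_toList, hf.cycleOf_eq hy]
  have hxl : x ∉ y :: l := by
    rw [← hl, mem_toList_iff]
    rintro ⟨hyx, -⟩
    exact hy (hyx.apply_eq_self_iff.2 hx)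
  have hnodup : (x :: y :: l).Nodup := (hl ▸ nodup_toList f y).cons hxl
  have hmerge : (x :: y :: l).formPerm = swap x y * f := by
    rw [List.formPerm_cons_cons, hform]
  have hcycle : (swap x y * f).IsCycle := hmerge ▸ List.isCycle_formPerm hnodup (by simp)
  have hcard : (y :: l).length = orderOf f := by
    rw [← hl, length_toList, hf.cycleOf_eq hy, hf.orderOf]
  refine ⟨hcycle, ?_⟩
  rw [hcycle.orderOf, ← hmerge, List.support_formPerm_of_nodup _ hnodup (by simp),
    List.toFinset_card_of_nodup hnodup, List.length_cons, hcard]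

end MergingCycles

section FoldedRuns

variable {M β : Type*} [Monoid M]

lemma getLast?_foldl_append_run {run : M → List M} {move : β → M → M} {g : β → M} {σ : M}
    (hrun : ∀ a, (run a).getLast? = some (a * σ)) (hmove : ∀ b a, move b a = a * g b)
    (bs : List β) {acc : List M} {x : M} (hacc : acc.getLast? = some x) :
    (bs.foldl (fun acc b => acc ++ run (move b (acc.getLastD 1))) acc).getLast? =
      some (x * (bs.map (g · * σ)).prod) := by
  induction bs generalizing acc x with
  | nil => simpa using hacc
  | cons b bs ih =>
    have hstep : (acc ++ run (move b (acc.getLastD 1))).getLast? = some (x * (g b * σ)) := by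
      simp [List.getLast?_append, hrun, hmove, hacc, List.getLastD_eq_getLast?, mul_assoc]
    rw [List.foldl_cons, ih hstep, List.map_cons, List.prod_cons, mul_assoc]

end FoldedRuns

section Generators

variable {n i j : ℕ}

/-- The transposition `(i i+1)` of positions underlying `left_i`. It is `1` if `n ≤ i + 1`, so that
`s_i c_{i+1} = c_i` also holds at the right end of the arrangement. -/
def adjSwap (n i : ℕ) : Perm (Fin n) :=
  if h : i + 1 < n then swap ⟨i, by omega⟩ ⟨i + 1, h⟩ else 1

/-- The cycle `i ↦ i + 1 ↦ ⋯ ↦ n - 1 ↦ i` of positions, whose inverse underlies `right_i`. It is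
`1` if `n ≤ i + 1`. -/
def tailCycle (n i : ℕ) : Perm (Fin n) := ((List.finRange n).drop i).formPerm

lemma adjSwap_of_lt (h : i + 1 < n) : adjSwap n i = swap ⟨i, by omega⟩ ⟨i + 1, h⟩ := dif_pos h

lemma adjSwap_of_le (h : n ≤ i + 1) : adjSwap n i = 1 := dif_neg h.not_gt

lemma adjSwap_mul_self (n i : ℕ) : adjSwap n i * adjSwap n i = 1 := by
  rcases lt_or_ge (i + 1) n with h | h
  · rw [adjSwap_of_lt h, swap_mul_self]
  · rw [adjSwap_of_le h, mul_one]

lemma val_adjSwap_apply (h : i + 1 < n) (p : Fin n) :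
    (adjSwap n i p : ℕ) = if (p : ℕ) = i then i + 1 else if (p : ℕ) = i + 1 then i else p := by
  rw [adjSwap_of_lt h, swap_apply_def]
  simp only [Fin.ext_iff]
  split_ifs <;> rfl

lemma nodup_drop_finRange (n i : ℕ) : ((List.finRange n).drop i).Nodup :=
  (List.nodup_finRange n).sublist (List.drop_sublist _ _)

lemma tailCycle_of_le (h : n ≤ i + 1) : tailCycle n i = 1 :=
  (List.formPerm_eq_one_iff _ (nodup_drop_finRange n i)).2 (by simp; omega)

lemma isCycle_tailCycle (h : i + 1 < n) : (tailCycle n i).IsCycle :=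
  List.isCycle_formPerm (nodup_drop_finRange n i) (by simp; omega)

lemma tailCycle_pow (n i : ℕ) : tailCycle n i ^ (n - i) = 1 := by
  simpa [tailCycle] using List.formPerm_pow_length_eq_one_of_nodup _ (nodup_drop_finRange n i)

lemma orderOf_tailCycle (h : i < n) : orderOf (tailCycle n i) = n - i := by
  rcases (show n = i + 1 ∨ i + 1 < n by omega) with rfl | h
  · rw [tailCycle_of_le le_rfl, orderOf_one, Nat.add_sub_cancel_left]
  rw [(isCycle_tailCycle h).orderOf, tailCycle,
    List.support_formPerm_of_nodup _ (nodup_drop_finRange n i), List.toFinset_card_of_nodup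
      (nodup_drop_finRange n i), List.length_drop, List.length_finRange]
  intro x hx
  grind [congrArg List.length hx]

lemma val_tailCycle_apply (n i : ℕ) (p : Fin n) :
    (tailCycle n i p : ℕ) =
      if (p : ℕ) < i then (p : ℕ) else if (p : ℕ) + 1 = n then i else p + 1 := by
  split_ifs with hpi hpn
  · rw [tailCycle, List.formPerm_apply_of_notMem]
    grind [List.mem_drop_iff_getElem]
  all_goals
    have hk : p - i < ((List.finRange n).drop i).length := by simp; omega
    have hp : p = ((List.finRange n).drop i)[p - i] := by ext; simp; omega
    conv_lhs => rw [hp, tailCycle, List.formPerm_apply_getElem _ (nodup_drop_finRange n i)]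
    simp only [List.length_drop, List.length_finRange, List.getElem_drop, List.getElem_finRange,
      Fin.cast_mk]
  · rw [show (p : ℕ) - i + 1 = n - i by omega, Nat.mod_self, add_zero]
  · rw [Nat.mod_eq_of_lt (by omega)]
    omega

lemma adjSwap_mul_tailCycle_succ (n i : ℕ) :
    adjSwap n i * tailCycle n (i + 1) = tailCycle n i := by
  rcases lt_or_ge (i + 1) n with h | h
  · rw [adjSwap_of_lt h, tailCycle, tailCycle, List.drop_eq_getElem_cons (i := i) (by simp; omega),
      List.drop_eq_getElem_cons (i := i + 1) (by simpa using h), List.formPerm_cons_cons]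
    simp
  · rw [adjSwap_of_le h, tailCycle_of_le h, tailCycle_of_le (by omega), mul_one]

lemma adjSwap_mul_tailCycle (n i : ℕ) : adjSwap n i * tailCycle n i = tailCycle n (i + 1) := by
  rw [← adjSwap_mul_tailCycle_succ, ← mul_assoc, adjSwap_mul_self, one_mul]

lemma tailCycle_mul_adjSwap (h : i + 2 < n) :
    tailCycle n i * adjSwap n i = adjSwap n (i + 1) * tailCycle n i := by
  rw [adjSwap_of_lt (i := i) (by omega), adjSwap_of_lt h, mul_swap_eq_swap_mul]
  congr 2 <;> ext <;> grind [val_tailCycle_apply]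

lemma commute_adjSwap_tailCycle (hij : i + 1 < j) : Commute (adjSwap n i) (tailCycle n j) := by
  rcases lt_or_ge (i + 1) n with h | h
  · rw [adjSwap_of_lt h, commute_iff_eq, eq_comm, mul_swap_eq_swap_mul]
    congr 2 <;> ext <;> grind [val_tailCycle_apply]
  · rw [adjSwap_of_le h]
    exact Commute.one_left _

lemma tailCycle_mul_tailCycle_add_two (n i : ℕ) :
    tailCycle n i * tailCycle n (i + 2) =
      adjSwap n i * (adjSwap n (i + 1) * tailCycle n (i + 2) ^ 2) := by
  rw [← adjSwap_mul_tailCycle_succ n i, ← adjSwap_mul_tailCycle_succ n (i + 1), sq]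
  simp only [mul_assoc]

lemma isCycle_tailCycle_sq (ho : Odd (n - i)) (h : i + 1 < n) : (tailCycle n i ^ 2).IsCycle := by
  rw [(isCycle_tailCycle h).pow_iff, orderOf_tailCycle (by omega)]
  exact Nat.coprime_two_left.2 ho

lemma orderOf_tailCycle_sq (ho : Odd (n - i)) : orderOf (tailCycle n i ^ 2) = n - i := by
  have horder : orderOf (tailCycle n i) = n - i := orderOf_tailCycle (Nat.sub_pos_iff_lt.1 ho.pos)
  rw [Nat.Coprime.orderOf_pow (horder.symm ▸ Nat.coprime_two_right.2 ho), horder]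

-- The product is `s_i s_{i+1} c_{i+2}²`. If `n - i ≥ 5`, the odd cycle `c_{i+2}` has a square that
-- is again a single cycle through `i + 2`, into which `s_{i+1}` and `s_i` insert `i + 1` and `i`.
lemma tailCycle_mul_tailCycle_add_two_pow (ho : Odd (n - i)) :
    (tailCycle n i * tailCycle n (i + 2)) ^ (n - i) = 1 := by
  rcases (show n ≤ i + 3 ∨ i + 5 ≤ n by grind) with h3 | h5
  · rw [tailCycle_of_le (i := i + 2) h3, mul_one, tailCycle_pow]
  have h : i + 2 < n := by omega
  have ho' : Odd (n - (i + 2)) := by grind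
  have hf_cycle := isCycle_tailCycle_sq ho' (by omega)
  have hf_order := orderOf_tailCycle_sq ho'
  set f := tailCycle n (i + 2) ^ 2 with hf
  have hf_apply (p : Fin n) : f p = tailCycle n (i + 2) (tailCycle n (i + 2) p) := by
    rw [hf, sq, Perm.mul_apply]
  have hf_left (k : ℕ) (hk : k < i + 2) : f ⟨k, by omega⟩ = ⟨k, by omega⟩ := by
    ext; grind [val_tailCycle_apply]
  have hf_head : f ⟨i + 2, h⟩ ≠ ⟨i + 2, h⟩ := by
    rw [Ne, Fin.ext_iff]; grind [val_tailCycle_apply]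
  obtain ⟨hg_cycle, hg_order⟩ :=
    isCycle_and_orderOf_swap_mul hf_cycle (hf_left (i + 1) (by omega)) hf_head
  set g := swap ⟨i + 1, by omega⟩ ⟨i + 2, h⟩ * f with hg
  have hg_left : g ⟨i, by omega⟩ = ⟨i, by omega⟩ := by
    rw [hg, Perm.mul_apply, hf_left i (by omega), swap_apply_of_ne_of_ne] <;> simp
  have hg_head : g ⟨i + 1, by omega⟩ ≠ ⟨i + 1, by omega⟩ := by
    rw [hg, Perm.mul_apply, hf_left (i + 1) (by omega), swap_apply_left]; simp
  have hmerged := (isCycle_and_orderOf_swap_mul hg_cycle hg_left hg_head).2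
  rw [tailCycle_mul_tailCycle_add_two, adjSwap_of_lt (i := i) (by omega), adjSwap_of_lt h,
    ← orderOf_dvd_iff_pow_eq_one, hmerged, hg_order, hf_order]
  exact dvd_of_eq (by omega)

end Generators

section LastArrangement

variable {n i : ℕ}

/-- The permutation `σ` of positions such that the last arrangement of `gen(a, i)` is `a ∘ σ`. -/
def lastPerm (n i : ℕ) : Perm (Fin n) :=
  if Odd (n - i) then adjSwap n i else tailCycle n (i + 2) * tailCycle n i * adjSwap n (i + 1)

lemma lastPerm_of_odd (h : Odd (n - i)) : lastPerm n i = adjSwap n i := if_pos h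

lemma lastPerm_of_even (h : Even (n - i)) :
    lastPerm n i = tailCycle n (i + 2) * tailCycle n i * adjSwap n (i + 1) :=
  if_neg (Nat.not_odd_iff_even.2 h)

lemma lastPerm_of_le (h : n ≤ i + 1) : lastPerm n i = 1 := by
  unfold lastPerm
  rw [adjSwap_of_le h, tailCycle_of_le h, tailCycle_of_le (by omega), adjSwap_of_le (by omega)]
  simp

lemma lastPerm_of_add_two_eq (h : i + 2 = n) : lastPerm n i = adjSwap n i := by
  rw [lastPerm_of_even (by grind), tailCycle_of_le (i := i + 2) (by omega),
    ← adjSwap_mul_tailCycle_succ n i, tailCycle_of_le (by omega),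
    adjSwap_of_le (i := i + 1) (by omega)]
  simp

lemma adjSwap_mul_lastPerm_succ (ho : Odd (n - i)) :
    adjSwap n i * lastPerm n (i + 1) =
      tailCycle n (i + 3) * (tailCycle n i * tailCycle n (i + 2)) * (tailCycle n (i + 3))⁻¹ := by
  rw [lastPerm_of_even (by grind)]
  have hswap : adjSwap n (i + 2) = tailCycle n (i + 2) * (tailCycle n (i + 3))⁻¹ :=
    eq_mul_inv_of_mul_eq (adjSwap_mul_tailCycle_succ n (i + 2))
  calc adjSwap n i * (tailCycle n (i + 3) * tailCycle n (i + 1) * adjSwap n (i + 2))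
      = tailCycle n (i + 3) * (adjSwap n i * tailCycle n (i + 1)) * adjSwap n (i + 2) := by
        simp only [← mul_assoc, (commute_adjSwap_tailCycle (show i + 1 < i + 3 by omega)).eq]
    _ = _ := by rw [adjSwap_mul_tailCycle_succ, hswap]; simp only [mul_assoc]

lemma adjSwap_mul_lastPerm_succ_pow (ho : Odd (n - i)) :
    (adjSwap n i * lastPerm n (i + 1)) ^ (n - i) = 1 := by
  rw [adjSwap_mul_lastPerm_succ ho, conj_pow, tailCycle_mul_tailCycle_add_two_pow ho, mul_one,
    mul_inv_cancel]

lemma lastPerm_succ_mul_pow_of_odd (ho : Odd (n - i)) :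
    lastPerm n (i + 1) * (adjSwap n i * lastPerm n (i + 1)) ^ (n - i - 1) = lastPerm n i := by
  rw [lastPerm_of_odd ho]
  apply mul_left_cancel (a := adjSwap n i)
  rw [← mul_assoc, ← pow_succ', Nat.sub_add_cancel ho.pos, adjSwap_mul_lastPerm_succ_pow ho,
    adjSwap_mul_self]

lemma tailCycle_inv_mul_adjSwap_succ_pow (h : i + 2 < n) :
    ((tailCycle n i)⁻¹ * adjSwap n (i + 1)) ^ (n - i - 3) =
      (tailCycle n i * adjSwap n i) ^ 2 := by
  set e := tailCycle n i * adjSwap n i with he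
  have hinv : (tailCycle n i)⁻¹ * adjSwap n (i + 1) = e⁻¹ := by
    rw [he, tailCycle_mul_adjSwap h, mul_inv_rev,
      inv_eq_of_mul_eq_one_left (adjSwap_mul_self n (i + 1))]
  have hconj : e = adjSwap n i * tailCycle n (i + 1) * (adjSwap n i)⁻¹ := by
    rw [adjSwap_mul_tailCycle_succ, inv_eq_of_mul_eq_one_left (adjSwap_mul_self n i)]
  have hpow : e ^ (n - i - 3 + 2) = 1 := by
    rw [hconj, conj_pow, show n - i - 3 + 2 = n - (i + 1) by omega, tailCycle_pow, mul_one,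
      mul_inv_cancel]
  rw [hinv, inv_pow, inv_eq_of_mul_eq_one_right]
  rw [← pow_add, hpow]

lemma lastPerm_succ_mul_prod_of_even (he : Even (n - i)) (h : i + 2 < n) :
    lastPerm n (i + 1) * (adjSwap n i * lastPerm n (i + 1) *
      (((tailCycle n i)⁻¹ * lastPerm n (i + 1)) ^ (n - i - 3) *
        (adjSwap n i * lastPerm n (i + 1)))) = lastPerm n i := by
  rw [lastPerm_of_odd (i := i + 1) (by grind), lastPerm_of_even he,
    tailCycle_inv_mul_adjSwap_succ_pow h]
  have hcs := tailCycle_mul_adjSwap h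
  set s := adjSwap n i
  set t := adjSwap n (i + 1)
  set c := tailCycle n i
  have hs : s * s = 1 := adjSwap_mul_self n i
  have ht : t * t = 1 := adjSwap_mul_self n (i + 1)
  calc t * (s * t * ((c * s) ^ 2 * (s * t)))
      = t * s * (t * (c * s)) * c * (s * s) * t := by simp only [sq, mul_assoc]
    _ = t * (s * c) * c * t := by
        rw [hcs, ← mul_assoc t t c, ht, hs]; simp only [mul_assoc, one_mul]
    _ = tailCycle n (i + 2) * c * t := by
        rw [adjSwap_mul_tailCycle, adjSwap_mul_tailCycle]

end LastArrangement

section Generation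

variable {n i : ℕ}

/-- The factor by which the move coded by `b` at position `i` multiplies an arrangement. -/
def movePerm (n i : ℕ) (b : Bool) : Perm (Fin n) :=
  if b then adjSwap n i else (tailCycle n i)⁻¹

lemma leftMove_eq_mul (a : Perm (Fin n)) : leftMove n i a = a * adjSwap n i := by
  rcases lt_or_ge (i + 1) n with h | h
  · rw [leftMove, dif_pos h, adjSwap_of_lt h]; rfl
  · rw [leftMove, dif_neg h.not_gt, adjSwap_of_le h, mul_one]

lemma cyc_eq_tailCycle_inv (h : i < n) :
    cyc (⟨i, h⟩ : Fin n) ⟨n - 1, by omega⟩ = (tailCycle n i)⁻¹ := by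
  have hfilter : (List.finRange n).filter
      (fun p => decide (⟨i, h⟩ ≤ p ∧ p ≤ ⟨n - 1, by omega⟩)) = (List.finRange n).drop i := by
    conv_lhs => rw [← List.take_append_drop i (List.finRange n), List.filter_append]
    rw [List.filter_eq_nil_iff.2, List.filter_eq_self.2, List.nil_append]
    · grind [List.mem_drop_iff_getElem, Fin.le_def]
    · grind [List.mem_take_iff_getElem, Fin.le_def]
  rw [cyc, hfilter, List.formPerm_reverse, tailCycle]

lemma rightMove_eq_mul (a : Perm (Fin n)) : rightMove n i a = a * (tailCycle n i)⁻¹ := by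
  rcases lt_or_ge (i + 1) n with h | h
  · rw [rightMove, dif_pos h, cyc_eq_tailCycle_inv (by omega)]; rfl
  · rw [rightMove, dif_neg h.not_gt, tailCycle_of_le h, inv_one, mul_one]

lemma move_eq_mul_movePerm (b : Bool) (a : Perm (Fin n)) :
    (if b then leftMove n i else rightMove n i) a = a * movePerm n i b := by
  cases b
  · exact rightMove_eq_mul a
  · exact leftMove_eq_mul a

lemma movesList_of_odd {m : ℕ} (ho : Odd m) (h : 2 < m) :
    movesList m = List.replicate (m - 1) true := by
  rw [movesList, if_neg (Nat.not_even_iff_odd.2 ho), if_pos h, ← List.replicate_succ',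
    ← List.replicate_succ, show m - 3 + 1 + 1 = m - 1 by omega]

lemma movesList_of_even {m : ℕ} (he : Even m) (h : 2 < m) :
    movesList m = true :: (List.replicate (m - 3) false ++ [true]) := by
  rw [movesList, if_pos he, if_pos h]

lemma lastPerm_succ_mul_prod_moves (h : i + 1 < n) :
    lastPerm n (i + 1) *
      ((movesList (n - i)).map (movePerm n i · * lastPerm n (i + 1))).prod = lastPerm n i := by
  rcases (show i + 2 = n ∨ i + 2 < n by omega) with h2 | h2
  · rw [lastPerm_of_le (i := i + 1) (by omega), lastPerm_of_add_two_eq h2,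
      show n - i = 2 by omega]
    simp [movesList, movePerm]
  rcases Nat.even_or_odd (n - i) with he | ho
  · rw [movesList_of_even he (by omega), ← lastPerm_succ_mul_prod_of_even he h2]
    simp [movePerm]
  · rw [movesList_of_odd ho (by omega), ← lastPerm_succ_mul_pow_of_odd ho]
    simp [movePerm]

lemma getLast?_gen {fuel : ℕ} (hfuel : n - i ≤ fuel) (a : Perm (Fin n)) :
    (gen n fuel a i).getLast? = some (a * lastPerm n i) := by
  induction fuel generalizing i a with
  | zero => simp [gen, lastPerm_of_le (show n ≤ i + 1 by omega)]
  | succ fuel ih =>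
    rcases lt_or_ge (i + 1) n with h | h
    · have hrun (a : Perm (Fin n)) := ih (i := i + 1) (by omega) a
      rw [gen, if_pos h, getLast?_foldl_append_run hrun move_eq_mul_movePerm _ (hrun a),
        mul_assoc, lastPerm_succ_mul_prod_moves h]
    · rw [gen, if_neg h.not_gt, lastPerm_of_le h]
      simp

lemma getLastD_Gen (n : ℕ) : (Gen n).getLastD 1 = lastPerm n 0 := by
  rw [Gen, List.getLastD_eq_getLast?, getLast?_gen (Nat.sub_zero n).le, one_mul, Option.getD_some]

end Generation

/-- The last arrangement of `Gen n` (for `n ≥ 2`) is: `(1,0,2,3,…,n-1)` if `n` is odd or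
`n = 2`; `(1,2,3,0)` if `n = 4`; and `(1,4,3,5,6,…,n-1,2,0)` if `n` is even with `n ≥ 6`. -/
theorem gen_getLast (n : ℕ) (hn : 2 ≤ n) :
    ((Odd n ∨ n = 2) →
      ((Gen n).getLastD 1) ⟨0, by omega⟩ = ⟨1, by omega⟩ ∧
      ((Gen n).getLastD 1) ⟨1, by omega⟩ = ⟨0, by omega⟩ ∧
      ∀ p : Fin n, 2 ≤ (p : ℕ) → ((Gen n).getLastD 1) p = p) ∧
    (∀ h4 : n = 4,
      ((Gen n).getLastD 1) ⟨0, by omega⟩ = ⟨1, by omega⟩ ∧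
      ((Gen n).getLastD 1) ⟨1, by omega⟩ = ⟨2, by omega⟩ ∧
      ((Gen n).getLastD 1) ⟨2, by omega⟩ = ⟨3, by omega⟩ ∧
      ((Gen n).getLastD 1) ⟨3, by omega⟩ = ⟨0, by omega⟩) ∧
    (Even n → ∀ h6 : 6 ≤ n,
      ((Gen n).getLastD 1) ⟨0, by omega⟩ = ⟨1, by omega⟩ ∧
      ((Gen n).getLastD 1) ⟨1, by omega⟩ = ⟨4, by omega⟩ ∧
      ((Gen n).getLastD 1) ⟨2, by omega⟩ = ⟨3, by omega⟩ ∧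
      (∀ j : ℕ, ∀ _h3 : 3 ≤ j, ∀ _hj : j ≤ n - 3,
        ((Gen n).getLastD 1) ⟨j, by omega⟩ = ⟨j + 2, by omega⟩) ∧
      ((Gen n).getLastD 1) ⟨n - 2, by omega⟩ = ⟨2, by omega⟩ ∧
      ((Gen n).getLastD 1) ⟨n - 1, by omega⟩ = ⟨0, by omega⟩) := by
  rw [getLastD_Gen]
  refine ⟨fun h => ?_, fun h4 => ?_, fun he h6 => ?_⟩
  · have hlast : lastPerm n 0 = adjSwap n 0 := by
      rcases h with ho | rfl
      · exact lastPerm_of_odd ho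
      · exact lastPerm_of_add_two_eq rfl
    rw [hlast]
    refine ⟨?_, ?_, fun p hp => ?_⟩ <;> ext <;> grind [val_adjSwap_apply]
  · subst h4
    rw [lastPerm_of_even (by decide)]
    refine ⟨?_, ?_, ?_, ?_⟩ <;> ext <;>
      grind [val_adjSwap_apply, val_tailCycle_apply, Perm.mul_apply]
  · rw [lastPerm_of_even (by simpa using he)]
    refine ⟨?_, ?_, ?_, fun j hj hjn => ?_, ?_, ?_⟩ <;> ext <;>
      grind [val_adjSwap_apply, val_tailCycle_apply, Perm.mul_apply]
end

section
/- Let n ≥ 1 and let σ, τ be two consecutive entries of the list Gen(n). Then there exist positions i ≤ j < n such that τ = σ ∘ c_{i,j}, where c_{i,j} is the permutation of Fin n with c_{i,j}(i) = j, c_{i,j}(p) = p−1 for i < p ≤ j, and c_{i,j}(p) = p otherwise. That is, each permutation in the generated sequence is obtained from the previous one by extracting a single element and inserting it at an earlier position. -/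
/-! Every block emitted by the recursion starts at its own argument, which is obtained by a move
from the last arrangement emitted before it. So two consecutive entries of the list either lie in
the same recursive block or are related by a single move, and `left_i` and `right_i` are both
insertions: they precompose with `cyc i (i + 1)` and `cyc i (n - 1)`. -/

section Insertion

variable {n : ℕ}

theorem reverse_filter_finRange_Icc (i j : Fin n) :
    ((List.finRange n).filter fun p => decide (i ≤ p ∧ p ≤ j)).reverse =
      List.ofFn fun k : Fin (j + 1 - i) => (⟨j - k, by omega⟩ : Fin n) := by
  refine List.Pairwise.eq_of_mem_iff (r := (· > ·)) ?_ ?_ fun p => ?_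
  · exact List.pairwise_reverse.2 ((List.pairwise_lt_finRange n).filter _)
  · refine List.pairwise_ofFn.2 fun k l hkl => ?_
    simp only [gt_iff_lt, Fin.lt_def] at hkl ⊢
    omega
  · simp only [List.mem_reverse, List.mem_filter, List.mem_finRange, true_and, decide_eq_true_eq,
      List.mem_ofFn, Fin.le_def, Fin.ext_iff]
    exact ⟨fun h => ⟨⟨j - p, by omega⟩, by simp only; omega⟩, fun ⟨k, hk⟩ => by omega⟩

/-- `j - k` is the entry at index `k` of the cycle `(j, j - 1, …, i)`; the modulus wraps around from
`i` to `j`. -/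
theorem cyc_apply_sub (i j : Fin n) {k : ℕ} (hk : k < j + 1 - i) :
    cyc i j ⟨j - k, by omega⟩ = ⟨j - (k + 1) % (j + 1 - i), by omega⟩ := by
  have hnodup := List.nodup_reverse.2
    ((List.nodup_finRange n).filter fun p => decide (i ≤ p ∧ p ≤ j))
  rw [reverse_filter_finRange_Icc] at hnodup
  rw [cyc, reverse_filter_finRange_Icc]
  have hnext := List.formPerm_apply_getElem _ hnodup k (by rwa [List.length_ofFn])
  rw [List.getElem_ofFn, List.getElem_ofFn] at hnext
  simpa only [List.length_ofFn] using hnext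

theorem cyc_apply_left {i j : Fin n} (hij : i ≤ j) : cyc i j i = j := by
  have hlen : (j - i + 1 : ℕ) = j + 1 - i := by omega
  have hsub : (j - (j - i) : ℕ) = i := by omega
  simpa [hlen, hsub] using cyc_apply_sub i j (k := j - i) (by omega)

theorem val_cyc_apply_of_lt_of_le {i j p : Fin n} (hip : i < p) (hpj : p ≤ j) :
    (cyc i j p : ℕ) = p - 1 := by
  have hmod : (j - p + 1) % (j + 1 - i : ℕ) = j - p + 1 := Nat.mod_eq_of_lt (by omega)
  have hsub : (j - (j - p) : ℕ) = p := by omega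
  have hpred : (j - (j - p + 1) : ℕ) = p - 1 := by omega
  simpa [hmod, hsub, hpred] using congrArg Fin.val (cyc_apply_sub i j (k := j - p) (by omega))

theorem cyc_apply_of_lt_or_gt {i j p : Fin n} (hp : p < i ∨ j < p) : cyc i j p = p := by
  refine List.formPerm_apply_of_notMem ?_
  simp only [List.mem_reverse, List.mem_filter, decide_eq_true_eq]
  omega

theorem cyc_eq_swap {i j : Fin n} (hij : (i : ℕ) + 1 = j) : cyc i j = Equiv.swap i j := by
  ext p
  rcases eq_or_ne p i with rfl | hpi
  · rw [cyc_apply_left (by omega), Equiv.swap_apply_left]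
  rcases eq_or_ne p j with rfl | hpj
  · rw [val_cyc_apply_of_lt_of_le (by omega) le_rfl, Equiv.swap_apply_right]
    omega
  · rw [cyc_apply_of_lt_or_gt (by omega), Equiv.swap_apply_of_ne_of_ne hpi hpj]

/-- The arrangement `τ` is obtained from `σ` by an insertion: the entry at some position `j` is
extracted and put back at a position `i ≤ j`. The product of permutations is composition, so
`(σ * cyc i j) p = σ (cyc i j p)`. -/
def IsInsertion (σ τ : Equiv.Perm (Fin n)) : Prop :=
  ∃ i j : Fin n, i ≤ j ∧ τ = σ * cyc i j

theorem isInsertion_leftMove {i : ℕ} (hi : i + 1 < n) (a : Equiv.Perm (Fin n)) :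
    IsInsertion a (leftMove n i a) := by
  refine ⟨⟨i, by omega⟩, ⟨i + 1, hi⟩, Fin.mk_le_mk.2 i.le_succ, ?_⟩
  rw [leftMove, dif_pos hi, cyc_eq_swap rfl]
  rfl

theorem isInsertion_rightMove {i : ℕ} (hi : i + 1 < n) (a : Equiv.Perm (Fin n)) :
    IsInsertion a (rightMove n i a) :=
  ⟨⟨i, by omega⟩, ⟨n - 1, by omega⟩, Fin.mk_le_mk.2 (by omega), dif_pos hi⟩

end Insertion

section Fold

variable {α β : Type*}

theorem head?_foldl_append {a : α} (f : List α → β → List α) (bs : List β) {l : List α}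
    (hl : l.head? = some a) : (bs.foldl (fun acc b => acc ++ f acc b) l).head? = some a :=
  bs.foldlRecOn (motive := fun acc : List α => acc.head? = some a) _ hl fun acc hacc b _ => by
    rw [List.head?_append, hacc, Option.some_or]

theorem isChain_foldl_append {R : α → α → Prop} {block : β → α → List α}
    (hchain : ∀ b x, (block b x).IsChain R) (hhead : ∀ b x, ∀ y ∈ (block b x).head?, R x y)
    (d : α) (bs : List β) {l : List α} (hl : l.IsChain R) :
    (bs.foldl (fun acc b => acc ++ block b (acc.getLastD d)) l).IsChain R := by
  refine bs.foldlRecOn _ hl fun acc hacc b _ => hacc.append (hchain _ _) fun x hx y hy => ?_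
  have hlast : acc.getLastD d = x := by
    rw [List.getLastD_eq_getLast?, Option.mem_def.1 hx, Option.getD_some]
  exact hhead b x y (hlast ▸ hy)

end Fold

theorem head?_gen (n fuel : ℕ) (a : Equiv.Perm (Fin n)) (i : ℕ) :
    (gen n fuel a i).head? = some a := by
  induction fuel generalizing a i with
  | zero => rfl
  | succ fuel ih =>
    rw [gen]
    split_ifs
    · exact head?_foldl_append _ _ (ih a (i + 1))
    · rfl

theorem isChain_gen (n fuel : ℕ) (a : Equiv.Perm (Fin n)) (i : ℕ) :
    (gen n fuel a i).IsChain IsInsertion := by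
  induction fuel generalizing a i with
  | zero => exact List.isChain_singleton a
  | succ fuel ih =>
    rw [gen]
    split_ifs with hi
    · refine isChain_foldl_append
        (block := fun (b : Bool) x =>
          gen n fuel ((if b then leftMove n i else rightMove n i) x) (i + 1))
        (fun _ _ => ih _ _) (fun b x y hy => ?_) 1 _ (ih a (i + 1))
      obtain rfl := Option.some_inj.1 ((head?_gen ..).symm.trans hy)
      cases b
      · exact isInsertion_rightMove hi x
      · exact isInsertion_leftMove hi x
    · exact List.isChain_singleton a

/-- Any two consecutive entries `σ, τ` of `Gen n` satisfy `τ = σ ∘ c` for the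
permutation `c = c_{i,j}` of `Fin n` (for some positions `i ≤ j`) with `c i = j`,
`c p = p - 1` for `i < p ≤ j`, and `c p = p` otherwise: each permutation is obtained
from the previous one by extracting the entry at position `j` and inserting it at the
earlier position `i`. -/
theorem gen_consecutive (n : ℕ) (hn : 1 ≤ n) (m : ℕ) (hm : m + 1 < (Gen n).length) :
    ∃ i j : Fin n, i ≤ j ∧ ∃ c : Fin n → Fin n,
      c i = j ∧
      (∀ p : Fin n, i < p → p ≤ j → (c p : ℕ) = (p : ℕ) - 1) ∧
      (∀ p : Fin n, p < i ∨ j < p → c p = p) ∧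
      ∀ p : Fin n,
        ((Gen n).get ⟨m + 1, hm⟩) p = ((Gen n).get ⟨m, by omega⟩) (c p) := by
  obtain ⟨i, j, hij, hstep⟩ : IsInsertion (Gen n)[m] (Gen n)[m + 1] :=
    (isChain_gen n n 1 0).getElem m hm
  exact ⟨i, j, hij, cyc i j, cyc_apply_left hij, fun _ => val_cyc_apply_of_lt_of_le,
    fun _ => cyc_apply_of_lt_or_gt, Equiv.congr_fun hstep⟩
end

section
/- Let n ≥ 1, let σ be a bijection of Fin n, and let i ≤ j < n. Let c_{i,j} be the permutation of Fin n with c_{i,j}(i) = j, c_{i,j}(p) = p−1 for i < p ≤ j, and c_{i,j}(p) = p otherwise (extracting the entry at position j and inserting it at position i). Then the Kendall tau distance between σ and σ ∘ c_{i,j} equals j − i. -/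
/-- The Kendall tau distance between two arrangements `σ τ : Fin n ≃ Fin n`
(where `σ j` is the entry at position `j`): the number of pairs of positions `p < q`
whose entries occur in the opposite relative order in the two arrangements, i.e. the
number of inversions of `σ⁻¹ ∘ τ`. -/
def kendall {n : ℕ} (σ τ : Equiv.Perm (Fin n)) : ℕ :=
  ((Finset.univ : Finset (Fin n × Fin n)).filter
    (fun pq => pq.1 < pq.2 ∧ σ.symm (τ pq.2) < σ.symm (τ pq.1))).card

/-!
By left invariance the distance from `σ` to `σ ∘ c` is the number of inversions of `c` alone, and
`c` is the inverse of the rotation `Fin.cycleIcc i j`. Deleting the entry at position `i` from `c`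
leaves the increasing enumeration of `{j}ᶜ`, so every inversion involves position `i`, and the entry
`j` placed there exceeds exactly those later entries at the `j - i` positions of `Ioc i j`.
-/

section Inversions

variable {α β : Type*} [Fintype α] [Preorder α] [DecidableLT α] [Preorder β] [DecidableLT β]

/-- The inversions of a function `f` from a finite preorder to a preorder, encoded as pairs
`(p, q)` with `p < q` whose values satisfy `f q < f p`. -/
def inversions (f : α → β) : Finset (α × α) :=
  {pq | pq.1 < pq.2 ∧ f pq.2 < f pq.1}

@[simp]
theorem mem_inversions {f : α → β} {p q : α} : (p, q) ∈ inversions f ↔ p < q ∧ f q < f p := by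
  simp [inversions]

theorem inversions_eq_singleton_product {f : α → β} {i : α} (hf : MonotoneOn f {i}ᶜ)
    (hi : ∀ p < i, f p ≤ f i) :
    inversions f = {i} ×ˢ ({q | i < q ∧ f q < f i} : Finset α) := by
  ext ⟨p, q⟩
  simp only [mem_inversions, Finset.mem_product, Finset.mem_singleton, Finset.mem_filter,
    Finset.mem_univ, true_and]
  constructor
  · rintro ⟨hpq, hlt⟩
    have hq : q ≠ i := by
      rintro rfl
      exact (hi p hpq).not_gt hlt
    have hp : p = i := by
      by_contra hp
      exact (hf hp hq hpq.le).not_gt hlt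
    subst hp
    exact ⟨rfl, hpq, hlt⟩
  · rintro ⟨rfl, h⟩
    exact h

end Inversions

theorem kendall_eq_card_inversions {n : ℕ} (σ τ : Equiv.Perm (Fin n)) :
    kendall σ τ = (inversions (σ⁻¹ * τ)).card :=
  rfl

theorem monotoneOn_compl_singleton_of_comp_succAbove {n : ℕ} {α : Type*} [Preorder α]
    {f : Fin (n + 1) → α} {i : Fin (n + 1)} (hf : Monotone (f ∘ i.succAbove)) :
    MonotoneOn f {i}ᶜ := by
  intro p hp q hq hpq
  obtain ⟨x, rfl⟩ := Fin.exists_succAbove_eq hp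
  obtain ⟨y, rfl⟩ := Fin.exists_succAbove_eq hq
  exact hf (Fin.succAbove_le_succAbove_iff.mp hpq)

section CycleIcc

variable {n : ℕ} {i j p : Fin n}

theorem cycleIcc_symm_apply_of_lt (hp : p < i) : (Fin.cycleIcc i j).symm p = p :=
  (Equiv.symm_apply_eq _).mpr (Fin.cycleIcc_of_lt hp).symm

theorem cycleIcc_symm_apply_of_gt (hp : j < p) : (Fin.cycleIcc i j).symm p = p :=
  (Equiv.symm_apply_eq _).mpr (Fin.cycleIcc_of_gt hp).symm

theorem cycleIcc_symm_apply_left (hij : i ≤ j) : (Fin.cycleIcc i j).symm i = j := by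
  have : NeZero n := .of_pos i.pos
  exact (Equiv.symm_apply_eq _).mpr (Fin.cycleIcc_of_last hij).symm

theorem val_cycleIcc_symm_apply_of_lt_of_le (hip : i < p) (hpj : p ≤ j) :
    ((Fin.cycleIcc i j).symm p : ℕ) = p - 1 := by
  have : NeZero n := .of_pos i.pos
  obtain ⟨q, hqp⟩ : ∃ q : Fin n, (q : ℕ) + 1 = p := ⟨⟨p - 1, by lia⟩, Nat.sub_add_cancel (by lia)⟩
  have hq : Fin.cycleIcc i j q = p := by
    rw [Fin.cycleIcc_of_ge_of_lt (by lia) (by lia)]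
    ext
    rw [Fin.val_add_one_of_lt' (by lia), hqp]
  rw [(Equiv.symm_apply_eq _).mpr hq.symm]
  lia

theorem eq_cycleIcc_symm {c : Fin n → Fin n} (hij : i ≤ j) (hci : c i = j)
    (hshift : ∀ p, i < p → p ≤ j → (c p : ℕ) = p - 1) (hfix : ∀ p, p < i ∨ j < p → c p = p) :
    c = (Fin.cycleIcc i j).symm := by
  funext p
  rcases lt_trichotomy p i with hpi | rfl | hip
  · rw [hfix p (.inl hpi), cycleIcc_symm_apply_of_lt hpi]
  · rw [hci, cycleIcc_symm_apply_left hij]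
  · rcases le_or_gt p j with hpj | hjp
    · ext
      rw [hshift p hip hpj, val_cycleIcc_symm_apply_of_lt_of_le hip hpj]
    · rw [hfix p (.inr hjp), cycleIcc_symm_apply_of_gt hjp]

theorem monotoneOn_cycleIcc_symm (hij : i ≤ j) : MonotoneOn (Fin.cycleIcc i j).symm {i}ᶜ := by
  cases n with
  | zero => exact i.elim0
  | succ n =>
    apply monotoneOn_compl_singleton_of_comp_succAbove
    have hcomp : (Fin.cycleIcc i j).symm ∘ i.succAbove = j.succAbove := by
      rw [Equiv.symm_comp_eq, Fin.cycleIcc_comp_succAbove i j hij]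
    rw [hcomp]
    exact (Fin.strictMono_succAbove j).monotone

theorem cycleIcc_symm_lt_iff (hip : i < p) : (Fin.cycleIcc i j).symm p < j ↔ p ≤ j := by
  rcases le_or_gt p j with hpj | hjp
  · have := val_cycleIcc_symm_apply_of_lt_of_le hip hpj
    lia
  · simp only [cycleIcc_symm_apply_of_gt hjp, hjp.not_gt, hjp.not_ge]

theorem inversions_cycleIcc_symm (hij : i ≤ j) :
    inversions (Fin.cycleIcc i j).symm = {i} ×ˢ Finset.Ioc i j := by
  have hi : ∀ p < i, (Fin.cycleIcc i j).symm p ≤ (Fin.cycleIcc i j).symm i := by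
    intro p hp
    rw [cycleIcc_symm_apply_of_lt hp, cycleIcc_symm_apply_left hij]
    exact hp.le.trans hij
  rw [inversions_eq_singleton_product (monotoneOn_cycleIcc_symm hij) hi,
    cycleIcc_symm_apply_left hij]
  congr 1
  ext q
  simp only [Finset.mem_filter, Finset.mem_univ, true_and, Finset.mem_Ioc]
  exact and_congr_right cycleIcc_symm_lt_iff

theorem card_inversions_cycleIcc_symm (hij : i ≤ j) :
    (inversions (Fin.cycleIcc i j).symm).card = (j : ℕ) - i := by
  rw [inversions_cycleIcc_symm hij, Finset.card_product, Finset.card_singleton, one_mul,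
    Fin.card_Ioc]

end CycleIcc

/-- If `τ = σ ∘ c_{i,j}` where `c_{i,j}` (for positions `i ≤ j`) extracts the entry at
position `j` and inserts it at position `i` (that is, `c_{i,j} i = j`, `c_{i,j} p = p - 1`
for `i < p ≤ j`, and `c_{i,j} p = p` otherwise), then the Kendall tau distance between
`σ` and `τ` equals `j - i`. -/
theorem kendall_extract_insert (n : ℕ) (hn : 1 ≤ n) (σ τ : Equiv.Perm (Fin n))
    (i j : Fin n) (hij : i ≤ j) (c : Fin n → Fin n)
    (hci : c i = j)
    (hc1 : ∀ p : Fin n, i < p → p ≤ j → (c p : ℕ) = (p : ℕ) - 1)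
    (hc2 : ∀ p : Fin n, p < i ∨ j < p → c p = p)
    (hτ : ∀ p : Fin n, τ p = σ (c p)) :
    kendall σ τ = (j : ℕ) - (i : ℕ) := by
  have hc : c = (Fin.cycleIcc i j).symm := eq_cycleIcc_symm hij hci hc1 hc2
  have hmul : σ⁻¹ * τ = (Fin.cycleIcc i j).symm := by
    ext p
    simp [hτ, hc]
  rw [kendall_eq_card_inversions, hmul, card_inversions_cycleIcc_symm hij]
end

section
/- Define D : ℕ → ℤ by D(1) = 0 and, for k ≥ 2, D(k) = k·D(k−1) + (k−3)·(k−1) + 2 if k is even and D(k) = k·D(k−1) + (k−1) if k is odd. Then the sequence of real numbers D(k)/(k! − 1) converges, as k → ∞, to 7·cosh(1) − 4·sinh(1) − 5. -/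
def D : ℕ → ℤ
  | 0 => 0
  | 1 => 0
  | k + 2 =>
      if Even (k + 2) then
        ((k : ℤ) + 2) * D (k + 1) + (((k : ℤ) + 2) - 3) * (((k : ℤ) + 2) - 1) + 2
      else
        ((k : ℤ) + 2) * D (k + 1) + (((k : ℤ) + 2) - 1)

/-!
Dividing `D k = k * D (k - 1) + c k` by `k!` makes it telescope, so `D k / k!` converges to
`∑ c k / k!` over `k ≥ 1`. For even `k` we have `c k = k (k - 1) - 3 k + 5`, whose terms sum to
`cosh 1 - 3 sinh 1 + 5 cosh 1` once `k = 0` is included, and for odd `k` we have `c k = k - 1`,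
whose terms sum to `cosh 1 - sinh 1`; the `k = 0` term to be removed is `5`. Replacing `k!` by
`k! - 1` does not affect the limit.
-/

open Filter Topology
open scoped Nat

section FactorialRecurrence

variable {𝕜 : Type*} [Field 𝕜] [CharZero 𝕜] {a c : ℕ → 𝕜}

theorem div_factorial_eq_add_sum (ha : ∀ n, a (n + 1) = (n + 1) * a n + c (n + 1)) (n : ℕ) :
    a n / n ! = a 0 + ∑ j ∈ Finset.range n, c (j + 1) / (j + 1)! := by
  induction n with
  | zero => simp
  | succ n ih =>
    have hn : (n + 1 : 𝕜) ≠ 0 := n.cast_add_one_ne_zero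
    have step : a (n + 1) / (n + 1)! = a n / n ! + c (n + 1) / (n + 1)! := by
      rw [ha, add_div, Nat.factorial_succ, Nat.cast_mul, Nat.cast_succ, mul_div_mul_left _ _ hn]
    rw [step, ih, Finset.sum_range_succ, add_assoc]

theorem tendsto_div_factorial_of_hasSum [TopologicalSpace 𝕜] [ContinuousAdd 𝕜] {s : 𝕜}
    (ha : ∀ n, a (n + 1) = (n + 1) * a n + c (n + 1))
    (hc : HasSum (fun n => c (n + 1) / (n + 1)!) s) :
    Tendsto (fun n => a n / n !) atTop (𝓝 (a 0 + s)) := by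
  simp only [div_factorial_eq_add_sum ha]
  exact hc.tendsto_sum_nat.const_add (a 0)

end FactorialRecurrence

theorem tendsto_div_sub_const_of_tendsto_div {α 𝕜 : Type*} [Field 𝕜] [LinearOrder 𝕜]
    [IsStrictOrderedRing 𝕜] [TopologicalSpace 𝕜] [OrderTopology 𝕜] {l : Filter α}
    {u f : α → 𝕜} {b : 𝕜} (hu : Tendsto (fun x => u x / f x) l (𝓝 b)) (hf : Tendsto f l atTop)
    (r : 𝕜) : Tendsto (fun x => u x / (f x - r)) l (𝓝 b) := by
  have h_denom : Tendsto (fun x => 1 - r / f x) l (𝓝 1) := by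
    simpa only [sub_zero] using (hf.const_div_atTop r).const_sub 1
  have h_quot : Tendsto (fun x => u x / f x / (1 - r / f x)) l (𝓝 b) := by
    simpa only [div_one, Pi.div_def] using hu.div h_denom one_ne_zero
  refine h_quot.congr' ?_
  filter_upwards [hf.eventually_ne_atTop 0] with x hx
  rw [div_div, mul_sub, mul_one, mul_div_cancel₀ r hx]

theorem add_one_mul_pow_div_factorial {𝕜 : Type*} [Field 𝕜] [CharZero 𝕜] (x : 𝕜) (n : ℕ) :
    (n + 1) * (x ^ (n + 1) / (n + 1)!) = x * (x ^ n / n !) := by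
  have hn : (n + 1 : 𝕜) ≠ 0 := n.cast_add_one_ne_zero
  rw [← mul_div_assoc, Nat.factorial_succ, Nat.cast_mul, Nat.cast_succ,
    mul_div_mul_left _ _ hn, pow_succ', mul_div_assoc]

theorem hasSum_odd_mul_pow_div_factorial (x : ℝ) :
    HasSum (fun n : ℕ => (2 * n + 1) * (x ^ (2 * n + 1) / (2 * n + 1)!)) (x * Real.cosh x) := by
  refine ((Real.hasSum_cosh x).mul_left x).congr_fun fun n => ?_
  exact mod_cast add_one_mul_pow_div_factorial x (2 * n)

theorem hasSum_even_mul_pow_div_factorial (x : ℝ) :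
    HasSum (fun n : ℕ => 2 * n * (x ^ (2 * n) / (2 * n)!)) (x * Real.sinh x) := by
  rw [← hasSum_nat_add_iff' 1]
  simp only [Finset.sum_range_one, Nat.cast_zero, mul_zero, zero_mul, sub_zero]
  refine ((Real.hasSum_sinh x).mul_left x).congr_fun fun n => ?_
  rw [← add_one_mul_pow_div_factorial]
  push_cast
  ring_nf

theorem hasSum_even_mul_pred_mul_pow_div_factorial (x : ℝ) :
    HasSum (fun n : ℕ => 2 * n * (2 * n - 1) * (x ^ (2 * n) / (2 * n)!))
      (x ^ 2 * Real.cosh x) := by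
  rw [← hasSum_nat_add_iff' 1]
  simp only [Finset.sum_range_one, Nat.cast_zero, mul_zero, zero_mul, sub_zero, sq, mul_assoc x]
  refine ((hasSum_odd_mul_pow_div_factorial x).mul_left x).congr_fun fun n => ?_
  rw [mul_left_comm, ← add_one_mul_pow_div_factorial]
  push_cast
  ring_nf

/-- The inhomogeneous term of the recurrence `D k = k * D (k - 1) + kendallIncrement k`,
extended to `k = 0`, where its value is `5`. -/
def kendallIncrement (k : ℕ) : ℤ :=
  if Even k then ((k : ℤ) - 3) * (k - 1) + 2 else (k : ℤ) - 1

theorem D_succ (k : ℕ) : D (k + 1) = (k + 1) * D k + kendallIncrement (k + 1) := by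
  cases k with
  | zero => simp [D, kendallIncrement]
  | succ k =>
    rw [D, kendallIncrement]
    split_ifs <;> push_cast <;> ring

theorem kendallIncrement_two_mul (n : ℕ) :
    kendallIncrement (2 * n) = 2 * n * (2 * n - 1) - 3 * (2 * n) + 5 := by
  rw [kendallIncrement, if_pos (even_two_mul n)]
  push_cast
  ring

theorem kendallIncrement_two_mul_add_one (n : ℕ) :
    kendallIncrement (2 * n + 1) = (2 * n + 1) - 1 := by
  rw [kendallIncrement, if_neg (Nat.not_even_two_mul_add_one n)]
  push_cast
  rfl

theorem hasSum_kendallIncrement_even :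
    HasSum (fun n : ℕ => (kendallIncrement (2 * n) : ℝ) / (2 * n)!)
      (6 * Real.cosh 1 - 3 * Real.sinh 1) := by
  have h_sum := ((hasSum_even_mul_pred_mul_pow_div_factorial 1).sub
    ((hasSum_even_mul_pow_div_factorial 1).mul_left 3)).add ((Real.hasSum_cosh 1).mul_left 5)
  rw [show 6 * Real.cosh 1 - 3 * Real.sinh 1 =
    1 ^ 2 * Real.cosh 1 - 3 * (1 * Real.sinh 1) + 5 * Real.cosh 1 by ring]
  refine h_sum.congr_fun fun n => ?_
  rw [kendallIncrement_two_mul, one_pow]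
  push_cast
  ring

theorem hasSum_kendallIncrement_odd :
    HasSum (fun n : ℕ => (kendallIncrement (2 * n + 1) : ℝ) / (2 * n + 1)!)
      (Real.cosh 1 - Real.sinh 1) := by
  have h_sum := (hasSum_odd_mul_pow_div_factorial 1).sub (Real.hasSum_sinh 1)
  rw [one_mul] at h_sum
  refine h_sum.congr_fun fun n => ?_
  rw [kendallIncrement_two_mul_add_one, one_pow]
  push_cast
  ring

theorem hasSum_kendallIncrement_succ :
    HasSum (fun n : ℕ => (kendallIncrement (n + 1) : ℝ) / (n + 1)!)
      (7 * Real.cosh 1 - 4 * Real.sinh 1 - 5) := by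
  have h_all := HasSum.even_add_odd (f := fun n : ℕ => (kendallIncrement n : ℝ) / n !)
    hasSum_kendallIncrement_even hasSum_kendallIncrement_odd
  have h_zero : (kendallIncrement 0 : ℝ) / 0 ! = 5 := by norm_num [kendallIncrement]
  have h_tail := (hasSum_nat_add_iff' 1).2 h_all
  rw [Finset.sum_range_one, h_zero] at h_tail
  rwa [show 7 * Real.cosh 1 - 4 * Real.sinh 1 - 5 =
    6 * Real.cosh 1 - 3 * Real.sinh 1 + (Real.cosh 1 - Real.sinh 1) - 5 by ring]

/-- `D k / (k! - 1)` converges to `7·cosh(1) - 4·sinh(1) - 5` as `k → ∞`. -/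
theorem tendsto_average_kendall :
    Filter.Tendsto (fun k : ℕ => (D k : ℝ) / ((k.factorial : ℝ) - 1))
      Filter.atTop (nhds (7 * Real.cosh 1 - 4 * Real.sinh 1 - 5)) := by
  have h_rec (k : ℕ) : (D (k + 1) : ℝ) = (k + 1) * D k + kendallIncrement (k + 1) := by
    exact_mod_cast D_succ k
  have h_lim := tendsto_div_factorial_of_hasSum (a := fun k => (D k : ℝ))
    (c := fun k => (kendallIncrement k : ℝ)) h_rec hasSum_kendallIncrement_succ
  have h_factorial : Tendsto (fun k : ℕ => (k ! : ℝ)) atTop atTop :=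
    tendsto_natCast_atTop_atTop.comp factorial_tendsto_atTop
  simp only [D, Int.cast_zero, zero_add] at h_lim
  exact tendsto_div_sub_const_of_tendsto_div h_lim h_factorial 1
end
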